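/- Fix integers n ≥ 3 and u ≥ 1 and consider the maximal cones of the fan Δ_u, namely σᵢ (1 ≤ i ≤ n) and σ_{ij} (1 ≤ i < j ≤ n). Their pairwise intersections are given as follows, and each is a common face of the two cones involved: σᵢ ∩ σ_j is the cone generated by {e} ∪ {f_k : k ≠ i, j} for i ≠ j; σ_{ik} ∩ σ_{jk} is the cone generated by {h, g_k} ∪ {f_l : l ≠ i, j, k} for distinct i, j, k; σᵢ ∩ σ_{ij} is the cone generated by {gᵢ} ∪ {f_k : k ≠ i, j} for i ≠ j; σ_{ij} ∩ σ_{pq} is the cone generated by {h} ∪ {f_k : k ∉ {i, j, p, q}} when {i, j} ∩ {p, q} = ∅; and σᵢ ∩ σ_{jk} is the cone generated by {f_l : l ∉ {i, j, k}} when i ∉ {j, k}. -/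

import Mathlib

/-!
Every intersection is obtained from one separating functional: if a linear functional `m` is
nonnegative on the generators of `σ`, nonpositive on those of `τ`, and its zeros on either list of
generators are the same set `Z`, then `σ ∩ τ = cone Z`, cut out by `m` on `σ` and by `-m` on `τ`
(`inter_of_separating`).

The only relation among the `n + 1` vectors `e, f₁, …, fₙ` of `ℝⁿ` is `f₁ + ⋯ + fₙ = 0`, so a
functional may be prescribed freely by `m e = α` and `m f_k = β_k` with `∑ β_k = 0`
(`exists_functional`), and then `m gᵢ = -uᵢ α - βᵢ` with `uᵢ > 0`. Writing `δ_i` for the `i`-th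
indicator, the following choices of `(α, β)` separate the five kinds of pairs:

* `σ_i, σ_j` and `σ_{ik}, σ_{jk}`: `α = 0`, `β = δ_j - δ_i`;
* `σ_i, σ_{ij}`: `α = 1`, `β = u_i (δ_j - δ_i)`;
* `σ_{ij}, σ_{pq}`: `α = 0`, `β = δ_p + δ_q - δ_i - δ_j`;
* `σ_i, σ_{jk}`: `α = 1`, `β = u_i (δ_j + δ_k - 2 δ_i)`.
-/

open Pointwise

/-- Ambient space `ℝⁿ`. -/
abbrev V (n : ℕ) := Fin n → ℝ

/-- The polyhedral cone generated by a finite set of vectors: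
all nonnegative linear combinations. -/
def coneOf {n : ℕ} (s : Finset (V n)) : Set (V n) :=
  {x | ∃ c : V n → ℝ, (∀ v, 0 ≤ c v) ∧ x = ∑ v ∈ s, c v • v}

/-- A polyhedral cone: the cone generated by finitely many vectors. -/
def IsPolyhedralCone {n : ℕ} (σ : Set (V n)) : Prop :=
  ∃ s : Finset (V n), σ = coneOf s

/-- A cone is strictly convex if `σ ∩ (−σ) = {0}`. -/
def IsStrictlyConvexCone {n : ℕ} (σ : Set (V n)) : Prop :=
  σ ∩ (-σ) = {0}

/-- `τ` is a face of `σ`: cut out on `σ` by a linear functional nonnegative on `σ`. -/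
def IsFaceOf {n : ℕ} (τ σ : Set (V n)) : Prop :=
  ∃ m : V n →ₗ[ℝ] ℝ, (∀ x ∈ σ, 0 ≤ m x) ∧ τ = {x ∈ σ | m x = 0}

/-- The dimension of a cone: the dimension of its linear span. -/
noncomputable def dimCone {n : ℕ} (σ : Set (V n)) : ℕ :=
  Module.finrank ℝ (Submodule.span ℝ σ)

/-- The ray `ℝ_{≥0}·x`. -/
def rayGen {n : ℕ} (x : V n) : Set (V n) :=
  {y | ∃ c : ℝ, 0 ≤ c ∧ y = c • x}

/-- The set `σ(1)` of rays (one-dimensional faces) of `σ`. -/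
def raysOf {n : ℕ} (σ : Set (V n)) : Set (Set (V n)) :=
  {ρ | IsFaceOf ρ σ ∧ dimCone ρ = 1}

/-- `η` is a facet of `σ`: a face of dimension `dim σ − 1`. -/
def IsFacetOf {n : ℕ} (η σ : Set (V n)) : Prop :=
  IsFaceOf η σ ∧ dimCone η = dimCone σ - 1

/-- The cone hull of an arbitrary set: all nonnegative combinations of
finitely many of its elements. -/
def coneHull {n : ℕ} (s : Set (V n)) : Set (V n) :=
  {x | ∃ t : Finset (V n), ↑t ⊆ s ∧
    ∃ c : V n → ℝ, (∀ v, 0 ≤ c v) ∧ x = ∑ v ∈ t, c v • v}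

/-- `σ'`: the cone generated by the union of the rays of `σ` other than `ρ`. -/
def primeCone {n : ℕ} (σ ρ : Set (V n)) : Set (V n) :=
  coneHull (⋃ ρ' ∈ raysOf σ \ {ρ}, ρ')

/-- `x` is beneath the supporting hyperplane `H_η` of the facet `η` of `κ`:
every witnessing functional is positive at `x`. -/
def Beneath {n : ℕ} (κ η : Set (V n)) (x : V n) : Prop :=
  ∀ m : V n →ₗ[ℝ] ℝ, (∀ y ∈ κ, 0 ≤ m y) → η = {y ∈ κ | m y = 0} → 0 < m x

/-- `x` is beyond the supporting hyperplane `H_η` of the facet `η` of `κ`: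
every witnessing functional is negative at `x`. -/
def Beyond {n : ℕ} (κ η : Set (V n)) (x : V n) : Prop :=
  ∀ m : V n →ₗ[ℝ] ℝ, (∀ y ∈ κ, 0 ≤ m y) → η = {y ∈ κ | m y = 0} → m x < 0

/-- `σ` (an `n`-dimensional cone in `ℝⁿ`) is a pyramidal extension of `σ'` by the
ray `ρ`, where `σ'` is the cone generated by the rays of `σ` other than `ρ`:
either `dim σ' = n − 1`, or `dim σ' = n` and there is precisely one facet `η` of
`σ'` such that the nonzero points of `ρ` are beyond `H_η`, while they are beneath
`H_{η'}` for every other facet `η'` of `σ'`. -/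
def IsPyramidalExtensionBy {n : ℕ} (σ ρ : Set (V n)) : Prop :=
  dimCone (primeCone σ ρ) = n - 1 ∨
  (dimCone (primeCone σ ρ) = n ∧
    ∃ η, IsFacetOf η (primeCone σ ρ) ∧
      (∀ x ∈ ρ, x ≠ 0 → Beyond (primeCone σ ρ) η x) ∧
      (∀ η', IsFacetOf η' (primeCone σ ρ) → η' ≠ η →
        ∀ x ∈ ρ, x ≠ 0 → Beneath (primeCone σ ρ) η' x))

/-- A fan in `ℝⁿ`: a finite collection of strictly convex polyhedral cones closed
under taking faces, in which any two cones intersect in a common face. -/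
def IsFan {n : ℕ} (Δ : Set (Set (V n))) : Prop :=
  Δ.Finite ∧
  (∀ σ ∈ Δ, IsPolyhedralCone σ ∧ IsStrictlyConvexCone σ) ∧
  (∀ σ ∈ Δ, ∀ τ, IsFaceOf τ σ → τ ∈ Δ) ∧
  (∀ σ ∈ Δ, ∀ τ ∈ Δ, IsFaceOf (σ ∩ τ) σ ∧ IsFaceOf (σ ∩ τ) τ)

/-! The vectors `e, f_i, h, g_i` and the cones `σ_i`, `σ_{ij}` of the fan `Δ_u`
(Section 6 of the paper), for `n ≥ 3` and an integer parameter `u`.  Indices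
`1, …, n` of the paper correspond to `0, …, n − 1 : Fin n`, the last index
`n` of the paper being `n − 1`. -/

/-- `e = eₙ`. -/
def eVec (n : ℕ) : V n := fun j => if (j : ℕ) = n - 1 then 1 else 0

/-- `fᵢ = eᵢ` for `i < n`, and `fₙ = −(e₁ + ⋯ + e_{n−1})`. -/
def fVec (n : ℕ) (i : Fin n) : V n :=
  if (i : ℕ) < n - 1 then Pi.single i 1
  else fun j => if (j : ℕ) = n - 1 then 0 else -1

/-- `h = −e`. -/
def hVec (n : ℕ) : V n := -eVec n

/-- `gᵢ = h − fᵢ` for `i < n`, and `gₙ = u·h − fₙ`. -/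
def gVec (n : ℕ) (u : ℤ) (i : Fin n) : V n :=
  if (i : ℕ) < n - 1 then hVec n - fVec n i
  else (u : ℝ) • hVec n - fVec n i

/-- The generators `{e, gᵢ} ∪ {f_k : k ≠ i}` of `σᵢ`. -/
noncomputable def genI (n : ℕ) (u : ℤ) (i : Fin n) : Finset (V n) :=
  insert (eVec n) (insert (gVec n u i) ((Finset.univ.erase i).image (fVec n)))

/-- The generators `{h, gᵢ, g_j} ∪ {f_k : k ≠ i, j}` of `σ_{ij}`. -/
noncomputable def genIJ (n : ℕ) (u : ℤ) (i j : Fin n) : Finset (V n) :=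
  insert (hVec n) (insert (gVec n u i) (insert (gVec n u j)
    (((Finset.univ.erase i).erase j).image (fVec n))))

/-- The cone `σᵢ`. -/
noncomputable def sigmaI (n : ℕ) (u : ℤ) (i : Fin n) : Set (V n) :=
  coneOf (genI n u i)

/-- The cone `σ_{ij}` (symmetric in `i`, `j`). -/
noncomputable def sigmaIJ (n : ℕ) (u : ℤ) (i j : Fin n) : Set (V n) :=
  coneOf (genIJ n u i j)

/-- The maximal cones `σᵢ (1 ≤ i ≤ n)` and `σ_{ij} (i ≠ j)` of `Δ_u`. -/
def maxCones (n : ℕ) (u : ℤ) : Set (Set (V n)) :=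
  {C | ∃ i, C = sigmaI n u i} ∪ {C | ∃ i j, i ≠ j ∧ C = sigmaIJ n u i j}

/-- The fan `Δ_u`: the maximal cones together with all their faces. -/
def deltaU (n : ℕ) (u : ℤ) : Set (Set (V n)) :=
  {τ | ∃ C ∈ maxCones n u, IsFaceOf τ C}

/-!
STATEMENT 11: For `n ≥ 3`, `u ≥ 1`, the pairwise intersections of the maximal
cones `σᵢ`, `σ_{ij}` of `Δ_u` are as listed, and each is a common face of the
two cones involved.
-/

lemma coneOf_mono {n : ℕ} {Z S : Finset (V n)} (h : Z ⊆ S) : coneOf Z ⊆ coneOf S := by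
  classical
  rintro x ⟨c, hc, rfl⟩
  refine ⟨fun v => if v ∈ Z then c v else 0, fun v => ?_, ?_⟩
  · by_cases hv : v ∈ Z <;> simp [hv, hc v]
  · rw [← Finset.sum_subset h]
    · exact Finset.sum_congr rfl fun v hv => by simp [hv]
    · intro v _ hv
      simp [hv]

lemma map_nonneg_of_mem_coneOf {n : ℕ} {S : Finset (V n)} {m : V n →ₗ[ℝ] ℝ}
    (hm : ∀ v ∈ S, 0 ≤ m v) {x : V n} (hx : x ∈ coneOf S) : 0 ≤ m x := by
  obtain ⟨c, hc, rfl⟩ := hx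
  rw [map_sum]
  exact Finset.sum_nonneg fun v hv => by
    simpa using mul_nonneg (hc v) (hm v hv)

/-- The face of a cone cut out by `m` is generated by the generators on which `m` vanishes. -/
lemma coneOf_eq_face {n : ℕ} {S Z : Finset (V n)} {m : V n →ₗ[ℝ] ℝ} (hZS : Z ⊆ S)
    (hZ : ∀ v ∈ Z, m v = 0) (hS : ∀ v ∈ S, v ∈ Z ∨ 0 < m v) :
    coneOf Z = {x ∈ coneOf S | m x = 0} := by
  have hS0 : ∀ v ∈ S, 0 ≤ m v := fun v hv => (hS v hv).elim (fun h => (hZ v h).ge) le_of_lt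
  ext x
  constructor
  · intro hx
    refine ⟨coneOf_mono hZS hx, ?_⟩
    obtain ⟨c, hc, rfl⟩ := hx
    rw [map_sum]
    exact Finset.sum_eq_zero fun v hv => by simp [hZ v hv]
  · rintro ⟨⟨c, hc, rfl⟩, hx⟩
    refine ⟨c, hc, (Finset.sum_subset hZS fun v hv hvZ => ?_).symm⟩
    have hpos : 0 < m v := (hS v hv).resolve_left hvZ
    rw [map_sum, Finset.sum_eq_zero_iff_of_nonneg
      (fun w hw => by simpa using mul_nonneg (hc w) (hS0 w hw))] at hx
    have := hx v hv
    simp only [map_smul, smul_eq_mul, mul_eq_zero, hpos.ne', or_false] at this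
    simp [this]

/-- A functional separating the generators of two cones, with common zero set `Z` among them,
exhibits the intersection as a common face, generated by `Z`. -/
lemma inter_of_separating {n : ℕ} {S T Z : Finset (V n)} (m : V n →ₗ[ℝ] ℝ)
    (hZS : Z ⊆ S) (hZT : Z ⊆ T) (hZ : ∀ v ∈ Z, m v = 0)
    (hS : ∀ v ∈ S, v ∈ Z ∨ 0 < m v) (hT : ∀ v ∈ T, v ∈ Z ∨ m v < 0) :
    coneOf S ∩ coneOf T = coneOf Z ∧
      IsFaceOf (coneOf S ∩ coneOf T) (coneOf S) ∧
      IsFaceOf (coneOf S ∩ coneOf T) (coneOf T) := by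
  have hT' : ∀ v ∈ T, v ∈ Z ∨ 0 < (-m) v := fun v hv => by simpa using hT v hv
  have hZ' : ∀ v ∈ Z, (-m) v = 0 := fun v hv => by simpa using hZ v hv
  have hSnn : ∀ x ∈ coneOf S, 0 ≤ m x := fun x => map_nonneg_of_mem_coneOf
    fun v hv => (hS v hv).elim (fun h => (hZ v h).ge) le_of_lt
  have hTnn : ∀ x ∈ coneOf T, 0 ≤ (-m) x := fun x => map_nonneg_of_mem_coneOf
    fun v hv => (hT' v hv).elim (fun h => (hZ' v h).ge) le_of_lt
  have hSf := coneOf_eq_face hZS hZ hS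
  have hTf := coneOf_eq_face hZT hZ' hT'
  have key : coneOf S ∩ coneOf T = coneOf Z := by
    apply Set.Subset.antisymm
    · rintro x ⟨hxS, hxT⟩
      have h1 := hSnn x hxS
      have h2 := hTnn x hxT
      rw [LinearMap.neg_apply] at h2
      rw [hSf]
      exact ⟨hxS, by linarith⟩
    · exact Set.subset_inter (coneOf_mono hZS) (coneOf_mono hZT)
  rw [key]
  exact ⟨rfl, ⟨m, hSnn, hSf⟩, ⟨-m, hTnn, hTf⟩⟩

/-- The multiple `uᵢ` of `h` in `gᵢ = uᵢ h - fᵢ`: `u` for the last index, `1` otherwise. -/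
def weight (n : ℕ) (u : ℤ) (i : Fin n) : ℝ := if (i : ℕ) < n - 1 then 1 else u

lemma weight_pos {n : ℕ} {u : ℤ} (hu : 1 ≤ u) (i : Fin n) : 0 < weight n u i := by
  have : (0 : ℝ) < u := by exact_mod_cast hu
  unfold weight
  split_ifs <;> simp [this]

lemma gVec_eq (n : ℕ) (u : ℤ) (i : Fin n) :
    gVec n u i = weight n u i • hVec n - fVec n i := by
  unfold gVec weight
  split_ifs <;> simp

/-- Functionals may be prescribed on `e` and the `f_k` subject only to the relation `∑ f_k = 0`. -/
lemma exists_functional {n : ℕ} (hn : 3 ≤ n) (u : ℤ) (α : ℝ) (β : Fin n → ℝ)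
    (hβ : ∑ k, β k = 0) :
    ∃ m : V n →ₗ[ℝ] ℝ, m (eVec n) = α ∧ m (hVec n) = -α ∧ (∀ k, m (fVec n k) = β k) ∧
      ∀ k, m (gVec n u k) = -(weight n u k * α) - β k := by
  obtain ⟨n, rfl⟩ : ∃ l, n = l + 1 := ⟨n - 1, by omega⟩
  rw [Fin.sum_univ_castSucc] at hβ
  -- `β_k` is imposed on `f_k = e_k` for `k < n`; the value on `fₙ = -∑ e_k` is then `βₙ`.
  let m : V (n + 1) →ₗ[ℝ] ℝ := α • LinearMap.proj (Fin.last n) +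
    ∑ i : Fin n, β i.castSucc • LinearMap.proj i.castSucc
  have hm : ∀ x, m x = α * x (Fin.last n) + ∑ i : Fin n, β i.castSucc * x i.castSucc := by
    intro x
    simp [m]
  have he : m (eVec (n + 1)) = α := by
    rw [hm]
    simp [eVec, (Fin.is_lt _).ne]
  have hh : m (hVec (n + 1)) = -α := by rw [hVec, map_neg, he]
  have hf : ∀ k, m (fVec (n + 1) k) = β k := by
    intro k
    rw [hm]
    induction k using Fin.lastCases with
    | last =>
      simp [fVec, (Fin.is_lt _).ne]
      linarith
    | cast k => simp [fVec, Pi.single_apply, (Fin.castSucc_lt_last k).ne']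
  refine ⟨m, he, hh, hf, fun k => ?_⟩
  rw [gVec_eq, map_sub, map_smul, hh, hf, smul_eq_mul]
  ring

set_option linter.unusedSimpArgs false in
theorem stmt_11 (n : ℕ) (hn : 3 ≤ n) (u : ℤ) (hu : 1 ≤ u) :
    -- σᵢ ∩ σⱼ = cone({e} ∪ {f_k : k ≠ i, j}) for i ≠ j
    (∀ i j : Fin n, i ≠ j →
      sigmaI n u i ∩ sigmaI n u j
        = coneOf (insert (eVec n) (((Finset.univ.erase i).erase j).image (fVec n))) ∧
      IsFaceOf (sigmaI n u i ∩ sigmaI n u j) (sigmaI n u i) ∧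
      IsFaceOf (sigmaI n u i ∩ sigmaI n u j) (sigmaI n u j)) ∧
    -- σ_{ik} ∩ σ_{jk} = cone({h, g_k} ∪ {f_l : l ≠ i, j, k}) for distinct i, j, k
    (∀ i j k : Fin n, i ≠ j → i ≠ k → j ≠ k →
      sigmaIJ n u i k ∩ sigmaIJ n u j k
        = coneOf (insert (hVec n) (insert (gVec n u k)
            ((((Finset.univ.erase i).erase j).erase k).image (fVec n)))) ∧
      IsFaceOf (sigmaIJ n u i k ∩ sigmaIJ n u j k) (sigmaIJ n u i k) ∧
      IsFaceOf (sigmaIJ n u i k ∩ sigmaIJ n u j k) (sigmaIJ n u j k)) ∧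
    -- σᵢ ∩ σ_{ij} = cone({gᵢ} ∪ {f_k : k ≠ i, j}) for i ≠ j
    (∀ i j : Fin n, i ≠ j →
      sigmaI n u i ∩ sigmaIJ n u i j
        = coneOf (insert (gVec n u i) (((Finset.univ.erase i).erase j).image (fVec n))) ∧
      IsFaceOf (sigmaI n u i ∩ sigmaIJ n u i j) (sigmaI n u i) ∧
      IsFaceOf (sigmaI n u i ∩ sigmaIJ n u i j) (sigmaIJ n u i j)) ∧
    -- σ_{ij} ∩ σ_{pq} = cone({h} ∪ {f_k : k ∉ {i,j,p,q}}) when {i,j} ∩ {p,q} = ∅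
    (∀ i j p q : Fin n, i ≠ j → p ≠ q → i ≠ p → i ≠ q → j ≠ p → j ≠ q →
      sigmaIJ n u i j ∩ sigmaIJ n u p q
        = coneOf (insert (hVec n)
            ((((((Finset.univ.erase i).erase j).erase p).erase q)).image (fVec n))) ∧
      IsFaceOf (sigmaIJ n u i j ∩ sigmaIJ n u p q) (sigmaIJ n u i j) ∧
      IsFaceOf (sigmaIJ n u i j ∩ sigmaIJ n u p q) (sigmaIJ n u p q)) ∧
    -- σᵢ ∩ σ_{jk} = cone({f_l : l ∉ {i,j,k}}) when i ∉ {j,k}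
    (∀ i j k : Fin n, j ≠ k → i ≠ j → i ≠ k →
      sigmaI n u i ∩ sigmaIJ n u j k
        = coneOf ((((Finset.univ.erase i).erase j).erase k).image (fVec n)) ∧
      IsFaceOf (sigmaI n u i ∩ sigmaIJ n u j k) (sigmaI n u i) ∧
      IsFaceOf (sigmaI n u i ∩ sigmaIJ n u j k) (sigmaIJ n u j k)) := by
  have hw := fun i : Fin n => weight_pos hu i
  have him := fun (A : Finset (Fin n)) (k : Fin n) (hk : k ∈ A) =>
    Finset.mem_image_of_mem (fVec n) hk
  -- In each case the values of `m` on the generators are known, and what remains is to compare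
  -- indices; a generator `f_k` lies in the smaller generating set as soon as `k` is not excluded.
  unfold sigmaI sigmaIJ genI genIJ
  refine ⟨fun i j hij => ?_, fun i j k hij hik hjk => ?_, fun i j hij => ?_,
    fun i j p q hij hpq hip hiq hjp hjq => ?_, fun i j k hjk hij hik => ?_⟩
  · obtain ⟨m, he, hh, hf, hg⟩ := exists_functional hn u 0
      (fun l => (if l = j then 1 else 0) - (if l = i then 1 else 0)) (by simp)
    apply inter_of_separating m <;>
    simp only [Finset.subset_iff, Finset.forall_mem_insert, Finset.forall_mem_image, he, hh, hf, hg,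
      Finset.mem_insert, Finset.mem_erase, Finset.mem_univ] <;>
    grind
  · obtain ⟨m, he, hh, hf, hg⟩ := exists_functional hn u 0
      (fun l => (if l = j then 1 else 0) - (if l = i then 1 else 0)) (by simp)
    apply inter_of_separating m <;>
    simp only [Finset.subset_iff, Finset.forall_mem_insert, Finset.forall_mem_image, he, hh, hf, hg,
      Finset.mem_insert, Finset.mem_erase, Finset.mem_univ] <;>
    grind
  · obtain ⟨m, he, hh, hf, hg⟩ := exists_functional hn u 1
      (fun l => (if l = j then weight n u i else 0) - (if l = i then weight n u i else 0)) (by simp)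
    apply inter_of_separating m <;>
    simp only [Finset.subset_iff, Finset.forall_mem_insert, Finset.forall_mem_image, he, hh, hf, hg,
      Finset.mem_insert, Finset.mem_erase, Finset.mem_univ] <;>
    grind
  · obtain ⟨m, he, hh, hf, hg⟩ := exists_functional hn u 0
      (fun l => (if l = p then 1 else 0) + (if l = q then 1 else 0)
        - (if l = i then 1 else 0) - (if l = j then 1 else 0))
      (by simp [Finset.sum_add_distrib])
    apply inter_of_separating m <;>
    simp only [Finset.subset_iff, Finset.forall_mem_insert, Finset.forall_mem_image, he, hh, hf, hg,
      Finset.mem_insert, Finset.mem_erase, Finset.mem_univ] <;>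
    grind
  · obtain ⟨m, he, hh, hf, hg⟩ := exists_functional hn u 1
      (fun l => (if l = j then weight n u i else 0) + (if l = k then weight n u i else 0)
        - (if l = i then 2 * weight n u i else 0))
      (by simp [Finset.sum_add_distrib, two_mul])
    apply inter_of_separating m <;>
    simp only [Finset.subset_iff, Finset.forall_mem_insert, Finset.forall_mem_image, he, hh, hf, hg,
      Finset.mem_insert, Finset.mem_erase, Finset.mem_univ] <;>
    grind
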